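/- arXiv:1907.00589 — 2 statements merged into one kernel-verified Lean document; each statement's English description precedes it below -/
import Mathlib

section
/- Let a = {a_j}_{j≥1} and b = {b_j}_{j≥1} be sequences of positive real numbers with a_1 ≤ a_2 ≤ ⋯ and inf_{j≥1} b_j > 0, let 0 < s < 2 and 0 < t ≤ 1, and for d ∈ ℕ, ε ∈ (0,1) let n(ε, I_d) = #{k ∈ ℤ^d : Σ_{j=1}^d a_j |k_j|^{2b_j} < ε^{-2} - 1}. Then (s,t)-weak tractability holds (i.e., lim_{ε^{-1}+d→∞} (ln n(ε, I_d))/((ε^{-1})^s + d^t) = 0) if and only if lim_{j→∞} a_j / j^{(2-s)/s} = ∞. -/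
open Filter

/-!
Write `x = ε⁻¹`, `R = x ^ 2 - 1` and `γ = (2 - s) / s`, and let `n` be the number of lattice points
`k` with `∑ a_j |k_j| ^ (2 b_j) < R`.

*Necessity.* If `a_d < C d ^ γ` for infinitely many `d`, then for such `d` and
`R = C d ^ (γ + 1) = C d ^ (2 / s)` all of `{0, 1}^d` is counted, so `ln n ≥ d ln 2`
(`le_log_count`), while `x ^ s + d ^ t` is at most a constant times `d` because `t ≤ 1`.

*Sufficiency.* Rankin's trick bounds the count by a product of one-dimensional theta-like sums
(`count_le_exp`): for every `lam ≥ 0`,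
`n ≤ exp (lam R) ∏_j θ_j (lam a_j)` with `θ_j u = ∑_k exp (-u |k| ^ (2 b_j))`.
Since `inf b_j > 0`, for every `p > 0` there is a constant with `ln θ_j u ≤ C u ^ (-p)` for all
`u > 0` and all `j` (`theta_le_exp`). The exponents `p = 1 / (2γ)` and `p = 2 / γ` on the two sides
of the critical `1 / γ` show that, if `a_j ≥ K j ^ γ`, then
`∑_j ln θ_j (lam a_j)` is at most a constant times `(lam K) ^ (-1 / γ)` (`sum_min_le`). With
`lam = η x ^ (s - 2)` both terms are of order `x ^ s`, with coefficients `η` and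
`const * (η K) ^ (-1 / γ)`. As `K` may be taken arbitrarily large at the cost of finitely many
exceptional `j`, which contribute only `O(x ^ (s / 2))`, this gives `ln n ≤ δ x ^ s + D_δ` for all
`x > 1` and uniformly in `d` (`log_count_le`), which is even stronger than weak tractability.
-/

/-! ### Counting lattice points by Rankin's trick -/

/-- The counted set lies in a cube, hence is finite and `Set.ncard` is its genuine cardinality. -/
lemma exists_box {d : ℕ} (a b : Fin d → ℝ) (ha : ∀ j, 0 < a j) (hb : ∀ j, 0 < b j) (R : ℝ) :
    ∃ B : ℕ, {k : Fin d → ℤ | ∑ j, a j * |(k j : ℝ)| ^ (2 * b j) < R} ⊆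
      (Fintype.piFinset fun _ : Fin d => Finset.Icc (-(B : ℤ)) B : Finset (Fin d → ℤ)) := by
  have h0 : ∀ j, 0 ≤ (max R 0 / a j) ^ (1 / (2 * b j)) := fun j =>
    Real.rpow_nonneg (div_nonneg (le_max_right _ _) (ha j).le) _
  -- Each coordinate is bounded by `(R / a j) ^ (1 / (2 * b j))`; the sum dominates all of these.
  refine ⟨⌈∑ j, (max R 0 / a j) ^ (1 / (2 * b j))⌉₊, fun k hk => ?_⟩
  simp only [Set.mem_ofPred_eq] at hk
  simp only [Finset.mem_coe, Fintype.mem_piFinset, Finset.mem_Icc, ← abs_le]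
  intro j
  have hterm : ∀ i, 0 ≤ a i * |(k i : ℝ)| ^ (2 * b i) := fun i =>
    mul_nonneg (ha i).le (Real.rpow_nonneg (abs_nonneg _) _)
  have h1 : a j * |(k j : ℝ)| ^ (2 * b j) ≤ max R 0 :=
    (Finset.single_le_sum (fun i _ => hterm i) (Finset.mem_univ j)).trans
      (hk.le.trans (le_max_left _ _))
  have h2 : |(k j : ℝ)| ^ (2 * b j) ≤ max R 0 / a j := by
    rw [le_div_iff₀ (ha j)]; linarith
  have h3 : |(k j : ℝ)| ≤ (max R 0 / a j) ^ (1 / (2 * b j)) := by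
    have hbj := hb j
    have := Real.rpow_le_rpow (Real.rpow_nonneg (abs_nonneg _) _) h2
      (by positivity : 0 ≤ 1 / (2 * b j))
    rwa [← Real.rpow_mul (abs_nonneg _), mul_one_div_cancel (by positivity), Real.rpow_one] at this
  have h4 := (h3.trans (Finset.single_le_sum (fun i _ => h0 i) (Finset.mem_univ j))).trans
    (Nat.le_ceil _)
  exact_mod_cast h4

/-- Rankin's trick: each counted `k` satisfies `1 ≤ exp (lam * (R - ∑ j, a j * |k j| ^ (2 * b j)))`,
and the sum of the right-hand side over a cube factorises into one-dimensional sums. -/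
lemma count_le_exp {d : ℕ} (a b : Fin d → ℝ) (ha : ∀ j, 0 < a j) (hb : ∀ j, 0 < b j) (R lam : ℝ)
    (hlam : 0 ≤ lam) (L : Fin d → ℝ)
    (hL : ∀ j, ∀ B : ℕ, ∑ k ∈ Finset.Icc (-(B : ℤ)) B,
      Real.exp (-(lam * a j * |(k : ℝ)| ^ (2 * b j))) ≤ Real.exp (L j)) :
    (({k : Fin d → ℤ | ∑ j, a j * |(k j : ℝ)| ^ (2 * b j) < R}).ncard : ℝ) ≤
      Real.exp (lam * R + ∑ j, L j) := by
  classical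
  obtain ⟨B, hB⟩ := exists_box a b ha hb R
  set S := {k : Fin d → ℤ | ∑ j, a j * |(k j : ℝ)| ^ (2 * b j) < R} with hS
  set P := (Fintype.piFinset fun _ : Fin d => Finset.Icc (-(B : ℤ)) B) with hP
  have hSP : S = ((P.filter (· ∈ S) : Finset (Fin d → ℤ)) : Set (Fin d → ℤ)) := by
    ext k
    simp only [Finset.coe_filter, Set.mem_ofPred_eq]
    exact ⟨fun h => ⟨hB h, h⟩, fun h => h.2⟩
  rw [hSP, Set.ncard_coe_finset]
  calc ((P.filter (· ∈ S)).card : ℝ) = ∑ k ∈ P.filter (· ∈ S), (1 : ℝ) := by simp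
    _ ≤ ∑ k ∈ P.filter (· ∈ S), Real.exp (lam * R) *
          ∏ j, Real.exp (-(lam * a j * |(k j : ℝ)| ^ (2 * b j))) := by
        refine Finset.sum_le_sum fun k hk => ?_
        have hk' : ∑ j, a j * |(k j : ℝ)| ^ (2 * b j) < R := (Finset.mem_filter.1 hk).2
        rw [← Real.exp_sum, ← Real.exp_add, Finset.sum_neg_distrib]
        apply Real.one_le_exp
        have : ∑ j, lam * a j * |(k j : ℝ)| ^ (2 * b j)
            = lam * ∑ j, a j * |(k j : ℝ)| ^ (2 * b j) := by
          rw [Finset.mul_sum]; simp only [mul_assoc]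
        rw [this]
        nlinarith [mul_le_mul_of_nonneg_left hk'.le hlam]
    _ ≤ ∑ k ∈ P, Real.exp (lam * R) *
          ∏ j, Real.exp (-(lam * a j * |(k j : ℝ)| ^ (2 * b j))) :=
        Finset.sum_le_sum_of_subset_of_nonneg (Finset.filter_subset _ _)
          fun _ _ _ => by positivity
    _ = Real.exp (lam * R) * ∏ j, ∑ k ∈ Finset.Icc (-(B : ℤ)) B,
          Real.exp (-(lam * a j * |(k : ℝ)| ^ (2 * b j))) := by
        rw [← Finset.mul_sum, hP, Finset.prod_univ_sum (fun _ : Fin d => Finset.Icc (-(B : ℤ)) B)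
          (fun j k => Real.exp (-(lam * a j * |(k : ℝ)| ^ (2 * b j))))]
    _ ≤ Real.exp (lam * R) * ∏ j, Real.exp (L j) := by
        refine mul_le_mul_of_nonneg_left (Finset.prod_le_prod (fun _ _ => ?_) fun j _ => hL j B)
          (Real.exp_pos _).le
        exact Finset.sum_nonneg fun _ _ => (Real.exp_pos _).le
    _ = _ := by rw [← Real.exp_sum, ← Real.exp_add]

/-! ### The one-dimensional theta sums -/

/-- The logarithm of the theta sum is `O(u ^ (-p))` for every `p > 0`, uniformly in `u`, in the
exponent `β ≥ b0` and in the truncation `B`. -/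
lemma theta_le_exp (b0 : ℝ) (hb0 : 0 < b0) (p : ℝ) (hp : 0 < p) :
    ∃ C : ℝ, 0 ≤ C ∧ ∀ u : ℝ, 0 < u → ∀ β : ℝ, b0 ≤ β → ∀ B : ℕ,
      ∑ k ∈ Finset.Icc (-(B : ℤ)) B, Real.exp (-(u * |(k : ℝ)| ^ (2 * β))) ≤
        Real.exp (C * u ^ (-p)) := by
  -- With `r ≥ 1 / b0`, the bound `exp (-y) ≤ r! / y ^ r` decays like `k ^ (-2)` in `k`, which gives
  -- the sum at most `1 + A / u ^ r`; `r ≥ p` then allows lowering the exponent from `r` to `p`.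
  obtain ⟨r, hr⟩ := exists_nat_ge (max (1 / b0) p)
  have hr1 : 1 ≤ b0 * r := by
    have := (le_max_left _ _).trans hr
    rw [div_le_iff₀ hb0] at this; linarith
  have hrp : p ≤ r := (le_max_right _ _).trans hr
  have hr0 : (0 : ℝ) < r := hp.trans_le hrp
  have hsum : Summable fun n : ℤ => 1 / (n : ℝ) ^ 2 := Real.summable_one_div_int_pow.2 (by norm_num)
  set T := ∑' n : ℤ, 1 / (n : ℝ) ^ 2 with hT
  have hT0 : 0 ≤ T := tsum_nonneg fun n => by positivity
  set A : ℝ := r.factorial * T with hA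
  have hA0 : 0 ≤ A := by positivity
  refine ⟨A ^ (p / r) / (p / r), by positivity, fun u hu β hβ B => ?_⟩
  -- At `k = 0` the last summand is `1 / 0 = 0`, so the indicator accounts for that term.
  have hterm : ∀ k : ℤ, Real.exp (-(u * |(k : ℝ)| ^ (2 * β))) ≤
      (if k = 0 then 1 else 0) + r.factorial / u ^ r * (1 / (k : ℝ) ^ 2) := by
    intro k
    by_cases hk : k = 0
    · subst hk
      have : 2 * β ≠ 0 := by linarith
      simp [Real.zero_rpow this]
    · have hk1 : (1 : ℝ) ≤ |(k : ℝ)| := by exact_mod_cast Int.one_le_abs hk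
      have hkr : (0 : ℝ) < |(k : ℝ)| := by linarith
      have hy : 0 < u * |(k : ℝ)| ^ (2 * β) := by positivity
      have h1 := Real.pow_div_factorial_le_exp _ hy.le r
      have h2 : u ^ r * (k : ℝ) ^ 2 ≤ (u * |(k : ℝ)| ^ (2 * β)) ^ r := by
        rw [mul_pow]
        refine mul_le_mul_of_nonneg_left ?_ (by positivity)
        rw [← sq_abs, ← Real.rpow_natCast (|(k : ℝ)| ^ (2 * β)), ← Real.rpow_mul hkr.le,
          ← Real.rpow_natCast]
        refine Real.rpow_le_rpow_of_exponent_le hk1 ?_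
        have : b0 * r ≤ β * r := by gcongr
        push_cast; linarith
      have hkne : (k : ℝ) ≠ 0 := by exact_mod_cast hk
      have hk2 : 0 < (k : ℝ) ^ 2 := by positivity
      rw [if_neg hk, zero_add, Real.exp_neg, div_mul_div_comm, mul_one]
      rw [inv_le_comm₀ (Real.exp_pos _) (by positivity), inv_div]
      exact le_trans (by gcongr) h1
  have hS : ∑ k ∈ Finset.Icc (-(B : ℤ)) B, Real.exp (-(u * |(k : ℝ)| ^ (2 * β))) ≤
      1 + A / u ^ r := by
    refine (Finset.sum_le_sum fun k _ => hterm k).trans ?_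
    rw [Finset.sum_add_distrib, ← Finset.mul_sum]
    refine add_le_add ?_ ?_
    · simp
    · have := hsum.sum_le_tsum (Finset.Icc (-(B : ℤ)) B) (fun n _ => by positivity)
      calc _ ≤ (r.factorial : ℝ) / u ^ r * T := by gcongr
        _ = _ := by rw [hA]; ring
  refine hS.trans ?_
  set q := p / r with hq
  have hq0 : 0 < q := by positivity
  have hq1 : q ≤ 1 := by rw [hq, div_le_one hr0]; exact hrp
  set x := A / u ^ r with hx
  have hx0 : 0 ≤ x := by positivity
  have hxq : x ^ q = A ^ q * u ^ (-p) := by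
    rw [hx, Real.div_rpow hA0 (by positivity), ← Real.rpow_natCast, ← Real.rpow_mul hu.le,
      Real.rpow_neg hu.le, hq, mul_div_cancel₀ _ hr0.ne', div_eq_mul_inv]
  -- `1 + x ≤ exp (x ^ q / q)`, from `(1 + x) ^ q ≤ 1 + x ^ q` for `0 < q ≤ 1`.
  have h3 : (1 + x) ^ q ≤ Real.exp (x ^ q) := by
    have := Real.rpow_add_le_add_rpow zero_le_one hx0 hq0.le hq1
    rw [Real.one_rpow] at this
    have h4 := Real.add_one_le_exp (x ^ q)
    linarith
  have h5 := Real.rpow_le_rpow (by positivity) h3 (by positivity : 0 ≤ 1 / q)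
  rw [← Real.rpow_mul (by positivity), mul_one_div_cancel hq0.ne', Real.rpow_one,
    ← Real.exp_mul, hxq] at h5
  refine h5.trans (le_of_eq ?_)
  congr 1; ring

/-- `theta_le_exp` for the exponents `g / 2` and `2 * g` at once. Lying on either side of the
critical exponent `g`, they make the sum over the coordinates converge at both ends. -/
lemma theta_le_exp_min (b0 : ℝ) (hb0 : 0 < b0) (g : ℝ) (hg : 0 < g) :
    ∃ C : ℝ, 0 ≤ C ∧ ∀ u : ℝ, 0 < u → ∀ β : ℝ, b0 ≤ β → ∀ B : ℕ,
      ∑ k ∈ Finset.Icc (-(B : ℤ)) B, Real.exp (-(u * |(k : ℝ)| ^ (2 * β))) ≤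
        Real.exp (C * min (√(u ^ (-g))) ((u ^ (-g)) ^ 2)) := by
  obtain ⟨C1, hC1, h1⟩ := theta_le_exp b0 hb0 (g / 2) (by positivity)
  obtain ⟨C2, hC2, h2⟩ := theta_le_exp b0 hb0 (g * 2) (by positivity)
  refine ⟨max C1 C2, le_max_of_le_left hC1, fun u hu β hβ B => ?_⟩
  have e1 : u ^ (-(g / 2)) = √(u ^ (-g)) := by
    rw [Real.sqrt_eq_rpow, ← Real.rpow_mul hu.le]; congr 1; ring
  have e2 : u ^ (-(g * 2)) = (u ^ (-g)) ^ 2 := by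
    rw [← Real.rpow_natCast, ← Real.rpow_mul hu.le]; congr 1; push_cast; ring
  have H1 := h1 u hu β hβ B
  have H2 := h2 u hu β hβ B
  rw [e1] at H1
  rw [e2] at H2
  rcases min_choice (√(u ^ (-g))) ((u ^ (-g)) ^ 2) with h | h <;> rw [h]
  · refine H1.trans (Real.exp_le_exp.2 ?_)
    exact mul_le_mul_of_nonneg_right (le_max_left _ _) (by positivity)
  · refine H2.trans (Real.exp_le_exp.2 ?_)
    exact mul_le_mul_of_nonneg_right (le_max_right _ _) (by positivity)

/-- The terms with `j + 1 < m` sum to `O(m)` through the square roots, those with `j + 1 ≥ m`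
through the squares. -/
lemma sum_min_le (m : ℝ) (hm : 0 < m) (n : ℕ) :
    ∑ j ∈ Finset.range n, min (√(m / (j + 1))) ((m / (j + 1)) ^ 2) ≤ 4 * m := by
  -- The two regimes of the partial sums, strengthened so that both bounds pass the induction step.
  have key : ((n : ℝ) < m → ∑ j ∈ Finset.range n, min (√(m / (j + 1))) ((m / (j + 1)) ^ 2)
        ≤ 2 * √(m * n)) ∧
      (m ≤ n → ∑ j ∈ Finset.range n, min (√(m / (j + 1))) ((m / (j + 1)) ^ 2)
        ≤ 4 * m - m ^ 2 / n) := by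
    induction n with
    | zero =>
      refine ⟨fun _ => by simp, fun h => ?_⟩
      simp at h; linarith
    | succ n ih =>
      rw [Finset.sum_range_succ]
      have hn : (0 : ℝ) ≤ n := Nat.cast_nonneg n
      push_cast
      refine ⟨fun h => ?_, fun h => ?_⟩
      · have h1 := ih.1 (by linarith)
        have h2 := min_le_left (√(m / (n + 1))) ((m / ((n : ℝ) + 1)) ^ 2)
        have h3 : 2 * √(m * n) + √(m / (n + 1)) ≤ 2 * √(m * (n + 1)) := by
          rw [Real.sqrt_mul hm.le, Real.sqrt_mul hm.le, Real.sqrt_div hm.le]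
          have hp : 0 < √((n : ℝ) + 1) := Real.sqrt_pos.2 (by linarith)
          have e1 := Real.sq_sqrt hn
          have e2 := Real.sq_sqrt (by linarith : (0 : ℝ) ≤ n + 1)
          have : 2 * √(n : ℝ) + 1 / √((n : ℝ) + 1) ≤ 2 * √((n : ℝ) + 1) := by
            rw [← sub_nonneg]
            have : 2 * √((n : ℝ) + 1) - (2 * √(n : ℝ) + 1 / √((n : ℝ) + 1)) =
              (2 * √((n : ℝ) + 1) ^ 2 - 2 * √(n : ℝ) * √((n : ℝ) + 1) - 1) / √((n : ℝ) + 1) := by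
              field_simp; ring
            rw [this]
            refine div_nonneg ?_ hp.le
            nlinarith [sq_nonneg (√((n : ℝ) + 1) - √(n : ℝ))]
          have := mul_le_mul_of_nonneg_left this (Real.sqrt_nonneg m)
          calc _ = √m * (2 * √(n : ℝ) + 1 / √((n : ℝ) + 1)) := by ring
            _ ≤ _ := this
            _ = _ := by ring
        linarith
      · have h2 := min_le_right (√(m / (n + 1))) ((m / ((n : ℝ) + 1)) ^ 2)
        have hn1 : (0 : ℝ) < n + 1 := by linarith
        by_cases hlt : (n : ℝ) < m
        · have h1 := ih.1 hlt
          have h3 : √(m * n) ≤ m := by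
            rw [Real.sqrt_le_left hm.le]; nlinarith
          have h4 : (m / ((n : ℝ) + 1)) ^ 2 ≤ m / (n + 1) := by
            have : m / ((n : ℝ) + 1) ≤ 1 := by rw [div_le_one hn1]; exact h
            have h0 : 0 ≤ m / ((n : ℝ) + 1) := by positivity
            nlinarith
          have h5 : m / ((n : ℝ) + 1) ≤ m := div_le_self hm.le (by linarith)
          have h6 : m ^ 2 / ((n : ℝ) + 1) ≤ m := by
            rw [div_le_iff₀ hn1]; nlinarith
          linarith
        · have hmn := not_lt.1 hlt
          have h1 := ih.2 hmn
          have hn0 : (0 : ℝ) < n := hm.trans_le hmn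
          have h3 : (m / ((n : ℝ) + 1)) ^ 2 ≤ m ^ 2 / n - m ^ 2 / (n + 1) := by
            have : m ^ 2 / n - m ^ 2 / (n + 1) = m ^ 2 / (n * (n + 1)) := by field_simp; ring
            rw [this, div_pow]
            gcongr
            nlinarith
          linarith
  rcases lt_or_ge (n : ℝ) m with h | h
  · have h3 : √(m * n) ≤ m := by
      rw [Real.sqrt_le_left hm.le]; nlinarith [(Nat.cast_nonneg n : (0 : ℝ) ≤ n)]
    linarith [key.1 h]
  · have : 0 ≤ m ^ 2 / (n : ℝ) := by positivity
    linarith [key.2 h]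

/-! ### Upper and lower bounds for the complexity -/

/-- Under the growth condition, `ln n(ε, I_d) = o(ε ^ (-s))` uniformly in the dimension `d`. -/
lemma log_count_le (a b : ℕ → ℝ) (ha : ∀ j, 0 < a j) (hb : ∀ j, 0 < b j)
    (hamono : Monotone a) (hbinf : 0 < ⨅ j, b j) (s : ℝ) (hs0 : 0 < s) (hs2 : s < 2)
    (hlim : Tendsto (fun j : ℕ => a j / (j : ℝ) ^ ((2 - s) / s)) atTop atTop)
    (δ : ℝ) (hδ : 0 < δ) :
    ∃ D : ℝ, 0 ≤ D ∧ ∀ d : ℕ, ∀ x : ℝ, 1 < x →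
      Real.log (({k : Fin d → ℤ |
          ∑ j : Fin d, a j * |(k j : ℝ)| ^ (2 * b j) < x ^ 2 - 1}).ncard) ≤ δ * x ^ s + D := by
  set γ := (2 - s) / s with hγ
  have hγ0 : 0 < γ := div_pos (by linarith) hs0
  set g := s / (2 - s) with hg
  have h2s : 0 < 2 - s := by linarith
  have hg0 : 0 < g := div_pos hs0 h2s
  have hγg : γ * g = 1 := by rw [hγ, hg]; field_simp
  have hsg : (s - 2) * -g = s := by rw [hg]; field_simp; ring
  have hble : ∀ j, (⨅ j, b j) ≤ b j := fun j =>
    ciInf_le ⟨0, by rintro _ ⟨i, rfl⟩; exact (hb i).le⟩ j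
  obtain ⟨C, hC, hθ⟩ := theta_le_exp_min _ hbinf g hg0
  set η := δ / 3 with hη
  have hη0 : 0 < η := by positivity
  -- `K` is chosen so large that the coordinates with `a j ≥ K * (j + 1) ^ γ` cost at most `η * x ^ s`.
  obtain ⟨K, hK0, hK⟩ : ∃ K : ℝ, 0 < K ∧ C * (4 * (η ^ (-g) * K ^ (-g))) ≤ η := by
    have h1 : Tendsto (fun K : ℝ => C * (4 * (η ^ (-g) * K ^ (-g)))) atTop (nhds 0) := by
      simpa using (((tendsto_rpow_neg_atTop hg0).const_mul (η ^ (-g))).const_mul 4).const_mul C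
    obtain ⟨K, h, h'⟩ := ((h1.eventually (ge_mem_nhds hη0)).and (eventually_gt_atTop 0)).exists
    exact ⟨K, h', h⟩
  obtain ⟨j0, hj0⟩ : ∃ j0 : ℕ, ∀ j ≥ j0, K * ((j : ℝ) + 1) ^ γ ≤ a j := by
    obtain ⟨j1, hj1⟩ := eventually_atTop.1 (tendsto_atTop.1 hlim (K * 2 ^ γ))
    refine ⟨max j1 1, fun j hj => ?_⟩
    have hj1' := hj1 j ((le_max_left _ _).trans hj)
    have hj : (1 : ℝ) ≤ j := by exact_mod_cast (le_max_right _ _).trans hj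
    rw [le_div_iff₀ (by positivity), mul_assoc, ← Real.mul_rpow (by norm_num) (by linarith)] at hj1'
    refine le_trans ?_ hj1'
    gcongr
    linarith
  set E := j0 * (C * √(η ^ (-g) * a 0 ^ (-g))) with hE
  have ha0 := ha 0
  have hE0 : 0 ≤ E := by positivity
  refine ⟨E ^ 2 / (4 * η), by positivity, fun d x hx => ?_⟩
  have hx0 : 0 < x := by linarith
  -- This choice balances `lam * x ^ 2` against `lam ^ (-g)`: both are of order `x ^ s`.
  set lam := η * x ^ (s - 2) with hlam
  have hlam0 : 0 < lam := by positivity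
  have hlamg : lam ^ (-g) = η ^ (-g) * x ^ s := by
    rw [hlam, Real.mul_rpow hη0.le (by positivity), ← Real.rpow_mul hx0.le, hsg]
  set m := (lam * K) ^ (-g) with hm
  have hm0 : 0 < m := by positivity
  have hcount := count_le_exp (d := d) (fun j => a j) (fun j => b j) (fun j => ha j)
    (fun j => hb j) (x ^ 2 - 1) lam hlam0.le
    (fun j => C * min (√((lam * a j) ^ (-g))) (((lam * a j) ^ (-g)) ^ 2))
    (fun j B => hθ (lam * a j) (mul_pos hlam0 (ha j)) (b j) (hble j) B)
  -- The finitely many `j < j0` are only known to satisfy `a j ≥ a 0`.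
  have hL : ∀ j : ℕ, C * min (√((lam * a j) ^ (-g))) (((lam * a j) ^ (-g)) ^ 2) ≤
      (if j < j0 then C * √((lam * a 0) ^ (-g)) else 0) +
        C * min (√(m / (j + 1))) ((m / (j + 1)) ^ 2) := by
    intro j
    split_ifs with hj
    · have h1 : (lam * a j) ^ (-g) ≤ (lam * a 0) ^ (-g) := by
        refine Real.rpow_le_rpow_of_nonpos (by positivity) ?_ (by linarith)
        exact mul_le_mul_of_nonneg_left (hamono (Nat.zero_le j)) hlam0.le
      have h2 : min (√((lam * a j) ^ (-g))) (((lam * a j) ^ (-g)) ^ 2) ≤ √((lam * a 0) ^ (-g)) :=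
        (min_le_left _ _).trans (Real.sqrt_le_sqrt h1)
      have h3 : 0 ≤ C * min (√(m / (j + 1))) ((m / (j + 1)) ^ 2) := by positivity
      linarith [mul_le_mul_of_nonneg_left h2 hC]
    · have h1 : (lam * a j) ^ (-g) ≤ m / (j + 1) := by
        have e : m / (j + 1) = (lam * (K * ((j : ℝ) + 1) ^ γ)) ^ (-g) := by
          rw [← mul_assoc, Real.mul_rpow (by positivity) (by positivity),
            ← Real.rpow_mul (by positivity), mul_neg, hγg, Real.rpow_neg_one, div_eq_mul_inv]
        rw [e]
        refine Real.rpow_le_rpow_of_nonpos (by positivity) ?_ (by linarith)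
        exact mul_le_mul_of_nonneg_left (hj0 j (not_lt.1 hj)) hlam0.le
      have haj := ha j
      rw [zero_add]
      gcongr
  have hsum : ∑ j : Fin d, C * min (√((lam * a j) ^ (-g))) (((lam * a j) ^ (-g)) ^ 2) ≤
      j0 * (C * √((lam * a 0) ^ (-g))) + C * (4 * m) := by
    rw [Fin.sum_univ_eq_sum_range
      (fun j => C * min (√((lam * a j) ^ (-g))) (((lam * a j) ^ (-g)) ^ 2))]
    refine (Finset.sum_le_sum fun j _ => hL j).trans ?_
    rw [Finset.sum_add_distrib, ← Finset.mul_sum]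
    refine add_le_add ?_ (mul_le_mul_of_nonneg_left (sum_min_le m hm0 d) hC)
    rw [← Finset.sum_filter, Finset.sum_const, nsmul_eq_mul]
    refine mul_le_mul_of_nonneg_right ?_ (by positivity)
    have : ((Finset.range d).filter (· < j0)).card ≤ (Finset.range j0).card :=
      Finset.card_le_card fun i hi => Finset.mem_range.2 (Finset.mem_filter.1 hi).2
    rw [Finset.card_range] at this
    exact_mod_cast this
  have hlog : Real.log (({k : Fin d → ℤ |
      ∑ j : Fin d, a j * |(k j : ℝ)| ^ (2 * b j) < x ^ 2 - 1}).ncard) ≤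
      lam * (x ^ 2 - 1) + ∑ j : Fin d, C * min (√((lam * a j) ^ (-g))) (((lam * a j) ^ (-g)) ^ 2) := by
    rcases Nat.eq_zero_or_pos (({k : Fin d → ℤ |
      ∑ j : Fin d, a j * |(k j : ℝ)| ^ (2 * b j) < x ^ 2 - 1}).ncard) with h | h
    · rw [h, Nat.cast_zero, Real.log_zero]
      have h1 : 0 ≤ x ^ 2 - 1 := by nlinarith
      have : ∀ j : Fin d, 0 ≤ C * min (√((lam * a j) ^ (-g))) (((lam * a j) ^ (-g)) ^ 2) :=
        fun j => by positivity
      have := Finset.sum_nonneg fun j (_ : j ∈ Finset.univ) => this j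
      positivity
    · rw [Real.log_le_iff_le_exp (by exact_mod_cast h)]
      exact hcount
  have hxs : lam * x ^ 2 = η * x ^ s := by
    rw [hlam, mul_assoc, ← Real.rpow_natCast, ← Real.rpow_add hx0]
    congr 2; push_cast; ring
  have hmeq : C * (4 * m) ≤ η * x ^ s := by
    have : C * (4 * m) = C * (4 * (η ^ (-g) * K ^ (-g))) * x ^ s := by
      rw [hm, Real.mul_rpow hlam0.le hK0.le, hlamg]; ring
    rw [this]
    gcongr
  have hEeq : j0 * (C * √((lam * a 0) ^ (-g))) = E * √(x ^ s) := by
    rw [Real.mul_rpow hlam0.le ha0.le, hlamg, mul_right_comm, Real.sqrt_mul (by positivity), hE]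
    ring
  -- AM-GM absorbs the contribution `E * x ^ (s / 2)` of the finitely many small weights.
  have hAM : E * √(x ^ s) ≤ η * x ^ s + E ^ 2 / (4 * η) := by
    have h1 := Real.sq_sqrt (by positivity : 0 ≤ x ^ s)
    have hsq : ∀ y : ℝ, η * y ^ 2 + E ^ 2 / (4 * η) - E * y = (2 * η * y - E) ^ 2 / (4 * η) := by
      intro y
      field_simp
      ring
    have h2 := hsq √(x ^ s)
    rw [h1] at h2
    have : 0 ≤ (2 * η * √(x ^ s) - E) ^ 2 / (4 * η) := by positivity
    linarith
  have hδη : δ = 3 * η := by rw [hη]; ring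
  rw [hδη]
  rw [hEeq] at hsum
  have hfirst : lam * (x ^ 2 - 1) ≤ η * x ^ s := by rw [mul_sub, hxs]; linarith
  linarith

/-- If `d * a d < R`, then all `2 ^ d` points of `{0, 1}^d` are counted. -/
lemma le_log_count (a b : ℕ → ℝ) (ha : ∀ j, 0 < a j) (hb : ∀ j, 0 < b j) (hamono : Monotone a)
    (d : ℕ) (R : ℝ) (hR : d * a d < R) :
    d * Real.log 2 ≤ Real.log (({k : Fin d → ℤ |
          ∑ j : Fin d, a j * |(k j : ℝ)| ^ (2 * b j) < R}).ncard) := by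
  have hsub : ((Fintype.piFinset fun _ : Fin d => ({0, 1} : Finset ℤ) : Finset (Fin d → ℤ)) :
      Set (Fin d → ℤ)) ⊆ {k : Fin d → ℤ | ∑ j : Fin d, a j * |(k j : ℝ)| ^ (2 * b j) < R} := by
    intro k hk
    simp only [Finset.mem_coe, Fintype.mem_piFinset, Finset.mem_insert,
      Finset.mem_singleton] at hk
    refine lt_of_le_of_lt ?_ hR
    calc ∑ j : Fin d, a j * |(k j : ℝ)| ^ (2 * b j) ≤ ∑ j : Fin d, a d := by
          refine Finset.sum_le_sum fun j _ => ?_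
          rcases hk j with h | h
          · have := hb j
            rw [h, Int.cast_zero, abs_zero, Real.zero_rpow (by positivity), mul_zero]
            exact (ha d).le
          · rw [h, Int.cast_one, abs_one, Real.one_rpow, mul_one]
            exact hamono j.2.le
      _ = d * a d := by simp
  obtain ⟨B, hB⟩ := exists_box (d := d) (fun j => a j) (fun j => b j) (fun j => ha j)
    (fun j => hb j) R
  have hcard := Set.ncard_le_ncard hsub ((Finset.finite_toSet _).subset hB)
  rw [Set.ncard_coe_finset, Fintype.card_piFinset_const] at hcard
  have : ({0, 1} : Finset ℤ).card = 2 := by decide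
  rw [this] at hcard
  rw [← Real.log_pow]
  exact Real.log_le_log (by positivity) (by exact_mod_cast hcard)

/-! ### The characterisation -/

/-- For the weighted anisotropic Sobolev embeddings with information complexity
`n(ε, I_d) = #{k ∈ ℤ^d : ∑_{j=1}^d a_j |k_j|^{2b_j} < ε^{-2} - 1}`:
for `0 < s < 2` and `0 < t ≤ 1`, `(s,t)`-weak tractability holds iff
`lim a_j / j^{(2-s)/s} = ∞`. -/
theorem s_t_WT_iff_cond
    (a b : ℕ → ℝ) (ha : ∀ j, 0 < a j) (hb : ∀ j, 0 < b j)
    (hamono : Monotone a) (hbinf : 0 < ⨅ j, b j)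
    (s t : ℝ) (hs0 : 0 < s) (hs2 : s < 2) (ht0 : 0 < t) (ht1 : t ≤ 1) :
    (∀ δ : ℝ, 0 < δ → ∃ M : ℝ, 0 < M ∧
        ∀ d : ℕ, 0 < d → ∀ ε : ℝ, ε ∈ Set.Ioo (0 : ℝ) 1 → M ≤ ε⁻¹ + d →
          |Real.log (({k : Fin d → ℤ |
              ∑ j : Fin d, a j * |(k j : ℝ)| ^ (2 * b j) < ε⁻¹ ^ 2 - 1}).ncard) /
            (ε⁻¹ ^ s + (d : ℝ) ^ t)| ≤ δ) ↔
      Tendsto (fun j : ℕ => a j / (j : ℝ) ^ ((2 - s) / s)) atTop atTop := by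
  constructor
  · intro H
    by_contra hcon
    rw [tendsto_atTop] at hcon
    push Not at hcon
    obtain ⟨C0, hC0⟩ := hcon
    set C := max C0 1 with hC
    have hC1 : 1 ≤ C := le_max_right _ _
    have hc0 : 0 < (1 + C) ^ (s / 2) + 1 := by positivity
    have hlog2 : 0 < Real.log 2 := Real.log_pos (by norm_num)
    obtain ⟨M, hM0, hM⟩ := H (Real.log 2 / ((1 + C) ^ (s / 2) + 1) / 2) (by positivity)
    obtain ⟨d, hdM, hd⟩ := frequently_atTop.1 hC0 (⌈M⌉₊ + 1)
    have hd1 : (1 : ℝ) ≤ d := by exact_mod_cast (by omega : 1 ≤ d)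
    have hdpos : (0 : ℝ) < d := by linarith
    have hMd : M ≤ d := (Nat.le_ceil M).trans (by exact_mod_cast (by omega : ⌈M⌉₊ ≤ d))
    have had : a d < C * (d : ℝ) ^ ((2 - s) / s) := by
      rw [← div_lt_iff₀ (by positivity)]
      exact hd.trans_le (le_max_left _ _)
    have hpow : (d : ℝ) * (d : ℝ) ^ ((2 - s) / s) = (d : ℝ) ^ (2 / s) := by
      nth_rewrite 1 [← Real.rpow_one (d : ℝ)]
      rw [← Real.rpow_add hdpos]
      congr 1; field_simp; ring
    -- The radius `ε⁻¹ ^ 2 - 1 = C * d ^ (2 / s)` just covers all of `{0, 1}^d`.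
    set x := √(1 + C * (d : ℝ) ^ (2 / s)) with hx
    have hR0 : 0 < C * (d : ℝ) ^ (2 / s) := by positivity
    have hx2 : x ^ 2 = 1 + C * (d : ℝ) ^ (2 / s) := Real.sq_sqrt (by positivity)
    have hx0 : 0 ≤ x := Real.sqrt_nonneg _
    have hx1 : 1 < x := by nlinarith
    have hcount := le_log_count a b ha hb hamono d (x ^ 2 - 1) (by
      rw [hx2, add_sub_cancel_left, ← hpow]
      calc d * a d < d * (C * (d : ℝ) ^ ((2 - s) / s)) := mul_lt_mul_of_pos_left had hdpos
        _ = _ := by ring)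
    have hxs : x ^ s ≤ (1 + C) ^ (s / 2) * d := by
      have e1 : x ^ s = (x ^ 2) ^ (s / 2) := by
        rw [← Real.rpow_natCast, ← Real.rpow_mul hx0]; congr 1; push_cast; ring
      have e2 : ((1 + C) * (d : ℝ) ^ (2 / s)) ^ (s / 2) = (1 + C) ^ (s / 2) * d := by
        rw [Real.mul_rpow (by positivity) (by positivity), ← Real.rpow_mul hdpos.le]
        rw [div_mul_div_cancel₀ hs0.ne', div_self two_ne_zero, Real.rpow_one]
      rw [e1, ← e2, hx2]
      refine Real.rpow_le_rpow (by positivity) ?_ (by positivity)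
      have := Real.one_le_rpow hd1 (by positivity : 0 ≤ 2 / s)
      linarith
    have hdt : (d : ℝ) ^ t ≤ d := by
      simpa using Real.rpow_le_rpow_of_exponent_le hd1 ht1
    have := hM d (by omega) x⁻¹ ⟨by positivity, inv_lt_one_of_one_lt₀ hx1⟩
      (by rw [inv_inv]; linarith)
    rw [inv_inv] at this
    have h1 := (le_abs_self _).trans this
    have hden : 0 < x ^ s + (d : ℝ) ^ t := by positivity
    rw [div_le_iff₀ hden] at h1
    have h2 : Real.log 2 / ((1 + C) ^ (s / 2) + 1) / 2 * (x ^ s + (d : ℝ) ^ t) ≤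
        d * Real.log 2 / 2 := by
      calc _ ≤ Real.log 2 / ((1 + C) ^ (s / 2) + 1) / 2 * (((1 + C) ^ (s / 2) + 1) * d) := by
            gcongr; linarith
        _ = _ := by field_simp
    nlinarith [mul_pos hdpos hlog2]
  · intro H δ hδ
    obtain ⟨D, hD0, hD⟩ := log_count_le a b ha hb hamono hbinf s hs0 hs2 H (δ / 2) (by positivity)
    -- Beyond `N`, both `y ^ s` and `y ^ t` exceed `2 * D / δ`.
    obtain ⟨N, hN⟩ := eventually_atTop.1
      ((tendsto_atTop.1 (tendsto_rpow_atTop hs0) (2 * D / δ)).and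
        (tendsto_atTop.1 (tendsto_rpow_atTop ht0) (2 * D / δ)))
    refine ⟨2 * max N 1, by positivity, fun d hd ε hε hM => ?_⟩
    have hx1 : 1 < ε⁻¹ := (one_lt_inv₀ hε.1).2 hε.2
    set x := ε⁻¹ with hx
    have hden : 2 * D / δ ≤ x ^ s + (d : ℝ) ^ t := by
      have hNM := le_max_left N 1
      have hxp : 0 ≤ x ^ s := by positivity
      have hdp : 0 ≤ (d : ℝ) ^ t := by positivity
      rcases le_total N x with h | h
      · linarith [(hN x h).1]
      · linarith [(hN d (by linarith)).2]
    have hden0 : 0 < x ^ s + (d : ℝ) ^ t := by positivity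
    rw [abs_of_nonneg (div_nonneg (Real.log_natCast_nonneg _) hden0.le), div_le_iff₀ hden0]
    refine (hD d x hx1).trans ?_
    rw [div_le_iff₀ hδ] at hden
    have hdp : 0 ≤ (d : ℝ) ^ t := by positivity
    nlinarith
end

section
/- Let a = {a_j}_{j≥1} and b = {b_j}_{j≥1} be sequences of positive real numbers with a_1 ≤ a_2 ≤ ⋯ and inf_{j≥1} b_j > 0, fix ω ∈ (0,1), and for d ∈ ℕ, ε ∈ (0,1) let n(ε, I_d) = #{k ∈ ℤ^d : Σ_{j=1}^d a_j |k_j|^{2b_j} < ε^{-2} - 1} and n(ε, APP_d) = #{k ∈ ℤ^d : ω^{Σ_{j=1}^d a_j |k_j|^{2b_j}} > ε²}. Then for fixed s, t > 0, the problem I = {I_d} is (2s,t)-weakly tractable (i.e., lim_{ε^{-1}+d→∞} (ln n(ε, I_d))/((ε^{-1})^{2s} + d^t) = 0) if and only if the problem APP = {APP_d} is EC-(s,t)-weakly tractable (i.e., lim_{ε^{-1}+d→∞} (ln n(ε, APP_d))/((1 + ln ε^{-1})^s + d^t) = 0). -/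
open Filter

/-!
Both complexities are values of one counting function
`N(d, x) = #{k ∈ ℤ^d : ∑ a_j |k_j|^{2 b_j} < x}`: the Sobolev problem uses `x = ε⁻² - 1`, the Korobov
problem uses `x = c ln ε⁻¹` with `c = 2 / ln ω⁻¹`, since `ε² < ω^S ↔ S < c ln ε⁻¹`
(`sq_lt_rpow_iff`). Both expressions range over all of `(0, ∞)`, so each problem is obtained from the
other by a reparametrization `ε ↦ τ ε` of `(0, 1)`. The denominators `(ε⁻¹)^{2s} = (1 + x)^s` and
`(1 + ln ε⁻¹)^s = (1 + x / c)^s` agree up to constant factors, and the two notions of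
`ε⁻¹ + d → ∞` correspond to each other. The lemma `weakTractability_transfer` turns these three
facts into the transfer of the limit, and it is applied once in each direction.

The argument only compares equal sets, so it does not need finiteness of the counted sets.
-/

/-- Transfer of the tractability limit along a reparametrization `τ` of the accuracy `ε`: the
numerators agree, the denominators are comparable, and `ε⁻¹ + d → ∞` forces
`(τ ε)⁻¹ + d → ∞`. -/
lemma weakTractability_transfer {F₁ F₂ D₁ D₂ : ℕ → ℝ → ℝ} (τ : ℝ → ℝ) (C : ℝ) (hC : 0 < C)
    (hτ : ∀ ε ∈ Set.Ioo (0 : ℝ) 1, τ ε ∈ Set.Ioo (0 : ℝ) 1)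
    (hF : ∀ d, ∀ ε ∈ Set.Ioo (0 : ℝ) 1, F₁ d (τ ε) = F₂ d ε)
    (hD₁ : ∀ d, 0 < d → ∀ ε ∈ Set.Ioo (0 : ℝ) 1, 0 < D₁ d ε)
    (hD : ∀ d, ∀ ε ∈ Set.Ioo (0 : ℝ) 1, D₁ d (τ ε) ≤ C * D₂ d ε)
    (hM : ∀ M : ℝ, 0 < M → ∃ M' : ℝ, 0 < M' ∧ ∀ d : ℕ, ∀ ε ∈ Set.Ioo (0 : ℝ) 1,
      M' ≤ ε⁻¹ + d → M ≤ (τ ε)⁻¹ + d)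
    (h : ∀ δ : ℝ, 0 < δ → ∃ M : ℝ, 0 < M ∧ ∀ d : ℕ, 0 < d → ∀ ε : ℝ, ε ∈ Set.Ioo (0 : ℝ) 1 →
      M ≤ ε⁻¹ + d → |F₁ d ε / D₁ d ε| ≤ δ) :
    ∀ δ : ℝ, 0 < δ → ∃ M : ℝ, 0 < M ∧ ∀ d : ℕ, 0 < d → ∀ ε : ℝ, ε ∈ Set.Ioo (0 : ℝ) 1 →
      M ≤ ε⁻¹ + d → |F₂ d ε / D₂ d ε| ≤ δ := by
  intro δ hδ
  obtain ⟨M, hM0, hMb⟩ := h (δ / C) (by positivity)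
  obtain ⟨M', hM'0, hM'⟩ := hM M hM0
  refine ⟨M', hM'0, fun d hd ε hε hle => ?_⟩
  have key := hMb d hd (τ ε) (hτ ε hε) (hM' d ε hε hle)
  have h1 := hD₁ d hd (τ ε) (hτ ε hε)
  have h2 := hD d ε hε
  have h3 : 0 < D₂ d ε := by
    by_contra! hcon
    nlinarith
  rw [hF d ε hε, abs_div, abs_of_pos h1, div_le_iff₀ h1] at key
  rw [abs_div, abs_of_pos h3, div_le_iff₀ h3]
  calc |F₂ d ε| ≤ δ / C * D₁ d (τ ε) := key
    _ ≤ δ / C * (C * D₂ d ε) := by gcongr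
    _ = δ * D₂ d ε := by field_simp

lemma sq_lt_rpow_iff {ω ε c S : ℝ} (hω : ω ∈ Set.Ioo (0 : ℝ) 1) (hε : 0 < ε)
    (hc : c = 2 / -Real.log ω) : ε ^ 2 < ω ^ S ↔ S < c * Real.log ε⁻¹ := by
  have hL : 0 < -Real.log ω := neg_pos.2 (Real.log_neg hω.1 hω.2)
  rw [← Real.log_lt_log_iff (by positivity) (Real.rpow_pos_of_pos hω.1 _),
    Real.log_rpow hω.1, Real.log_pow, Real.log_inv, hc, div_mul_eq_mul_div, lt_div_iff₀ hL]
  push_cast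
  constructor <;> intro h <;> linarith

/-- If `u ≤ C v`, then the denominator built from `u` is at most a constant times the one built
from `v`; the constant `C ^ s + 1` serves both summands. -/
lemma rpow_add_le {u v C s e : ℝ} (hu : 0 ≤ u) (hv : 0 ≤ v) (hC : 0 ≤ C) (hs : 0 < s)
    (he : 0 ≤ e) (h : u ≤ C * v) : u ^ s + e ≤ (C ^ s + 1) * (v ^ s + e) := by
  have h1 : u ^ s ≤ C ^ s * v ^ s := by
    rw [← Real.mul_rpow hC hv]
    exact Real.rpow_le_rpow hu h hs.le
  have h2 : 0 ≤ C ^ s * e := by positivity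
  have h3 : 0 ≤ v ^ s := by positivity
  linarith [add_mul (C ^ s) 1 (v ^ s + e), mul_add (C ^ s) (v ^ s) e]

lemma rpow_two_mul' {r : ℝ} (hr : 0 ≤ r) (s : ℝ) : r ^ (2 * s) = (r ^ 2) ^ s := by
  rw [Real.rpow_mul hr, Real.rpow_two]

/-- With `n(ε, I_d) = #{k ∈ ℤ^d : ∑ a_j |k_j|^{2b_j} < ε^{-2} - 1}` and
`n(ε, APP_d) = #{k ∈ ℤ^d : ω^{∑ a_j |k_j|^{2b_j}} > ε²}`, for fixed `s, t > 0`: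
`I` is `(2s,t)`-weakly tractable iff `APP` is EC-`(s,t)`-weakly tractable. -/
theorem two_s_t_WT_iff_EC_s_t_WT
    (a b : ℕ → ℝ) (ha : ∀ j, 0 < a j) (hb : ∀ j, 0 < b j)
    (hamono : Monotone a) (hbinf : 0 < ⨅ j, b j)
    (ω : ℝ) (hω : ω ∈ Set.Ioo (0 : ℝ) 1)
    (s t : ℝ) (hs : 0 < s) (ht : 0 < t) :
    (∀ δ : ℝ, 0 < δ → ∃ M : ℝ, 0 < M ∧
        ∀ d : ℕ, 0 < d → ∀ ε : ℝ, ε ∈ Set.Ioo (0 : ℝ) 1 → M ≤ ε⁻¹ + d →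
          |Real.log (({k : Fin d → ℤ |
              ∑ j : Fin d, a j * |(k j : ℝ)| ^ (2 * b j) < ε⁻¹ ^ 2 - 1}).ncard) /
            (ε⁻¹ ^ (2 * s) + (d : ℝ) ^ t)| ≤ δ) ↔
      (∀ δ : ℝ, 0 < δ → ∃ M : ℝ, 0 < M ∧
        ∀ d : ℕ, 0 < d → ∀ ε : ℝ, ε ∈ Set.Ioo (0 : ℝ) 1 → M ≤ ε⁻¹ + d →
          |Real.log (({k : Fin d → ℤ |
              ε ^ 2 < ω ^ (∑ j : Fin d, a j * |(k j : ℝ)| ^ (2 * b j))}).ncard) /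
            ((1 + Real.log ε⁻¹) ^ s + (d : ℝ) ^ t)| ≤ δ) := by
  set c : ℝ := 2 / -Real.log ω with hc
  have hL : 0 < -Real.log ω := neg_pos.2 (Real.log_neg hω.1 hω.2)
  have hc0 : 0 < c := by positivity
  have hlog : ∀ ε ∈ Set.Ioo (0 : ℝ) 1, 0 < Real.log ε⁻¹ := fun ε hε =>
    Real.log_pos ((one_lt_inv₀ hε.1).2 hε.2)
  have hinv : ∀ ε ∈ Set.Ioo (0 : ℝ) 1, 1 < ε⁻¹ := fun ε hε => (one_lt_inv₀ hε.1).2 hε.2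
  constructor
  · -- `τ` solves `(τ ε)⁻² - 1 = c ln ε⁻¹`.
    have hsq : ∀ ε ∈ Set.Ioo (0 : ℝ) 1,
        √(1 + c * Real.log ε⁻¹) ^ 2 = 1 + c * Real.log ε⁻¹ := fun ε hε =>
      Real.sq_sqrt (by have := mul_pos hc0 (hlog ε hε); linarith)
    refine weakTractability_transfer
      (F₁ := fun d ε => Real.log (({k : Fin d → ℤ |
        ∑ j : Fin d, a j * |(k j : ℝ)| ^ (2 * b j) < ε⁻¹ ^ 2 - 1}).ncard))
      (D₁ := fun d ε => ε⁻¹ ^ (2 * s) + (d : ℝ) ^ t)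
      (F₂ := fun d ε => Real.log (({k : Fin d → ℤ |
        ε ^ 2 < ω ^ (∑ j : Fin d, a j * |(k j : ℝ)| ^ (2 * b j))}).ncard))
      (D₂ := fun d ε => (1 + Real.log ε⁻¹) ^ s + (d : ℝ) ^ t)
      (fun ε => (√(1 + c * Real.log ε⁻¹))⁻¹) ((1 + c) ^ s + 1) (by positivity)
      ?_ ?_ ?_ ?_ ?_
    · intro ε hε
      have h1 : 1 < √(1 + c * Real.log ε⁻¹) := by
        rw [Real.lt_sqrt zero_le_one]
        have := mul_pos hc0 (hlog ε hε)
        linarith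
      exact ⟨by positivity, inv_lt_one_of_one_lt₀ h1⟩
    · intro d ε hε
      simp only [inv_inv, hsq ε hε, add_sub_cancel_left, sq_lt_rpow_iff hω hε.1 hc]
    · intro d hd ε hε
      have := hε.1
      positivity
    · intro d ε hε
      have h0 := hlog ε hε
      simp only [inv_inv]
      rw [rpow_two_mul' (Real.sqrt_nonneg _), hsq ε hε]
      exact rpow_add_le (by positivity) (by positivity) (by positivity) hs (by positivity)
        (by nlinarith)
    · intro M hM
      refine ⟨Real.exp (M ^ 2 / c) + M, by positivity, fun d ε hε hle => ?_⟩
      simp only [inv_inv]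
      by_contra! hcon
      have h0 := hlog ε hε
      have hd : (0 : ℝ) ≤ d := d.cast_nonneg
      have h1 := Real.sqrt_nonneg (1 + c * Real.log ε⁻¹)
      have h2 : Real.log ε⁻¹ < M ^ 2 / c := by
        rw [lt_div_iff₀ hc0]
        nlinarith [hsq ε hε]
      have h3 : ε⁻¹ < Real.exp (M ^ 2 / c) :=
        (Real.log_lt_iff_lt_exp (inv_pos.2 hε.1)).1 h2
      linarith
  · -- `τ` solves `c ln (τ ε)⁻¹ = ε⁻² - 1`.
    have hpos : ∀ ε ∈ Set.Ioo (0 : ℝ) 1, 0 < (ε⁻¹ ^ 2 - 1) / c := fun ε hε =>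
      div_pos (by nlinarith [hinv ε hε]) hc0
    refine weakTractability_transfer
      (F₁ := fun d ε => Real.log (({k : Fin d → ℤ |
        ε ^ 2 < ω ^ (∑ j : Fin d, a j * |(k j : ℝ)| ^ (2 * b j))}).ncard))
      (D₁ := fun d ε => (1 + Real.log ε⁻¹) ^ s + (d : ℝ) ^ t)
      (F₂ := fun d ε => Real.log (({k : Fin d → ℤ |
        ∑ j : Fin d, a j * |(k j : ℝ)| ^ (2 * b j) < ε⁻¹ ^ 2 - 1}).ncard))
      (D₂ := fun d ε => ε⁻¹ ^ (2 * s) + (d : ℝ) ^ t)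
      (fun ε => (Real.exp ((ε⁻¹ ^ 2 - 1) / c))⁻¹) ((1 + 1 / c) ^ s + 1) (by positivity)
      ?_ ?_ ?_ ?_ ?_
    · intro ε hε
      exact ⟨by positivity, inv_lt_one_of_one_lt₀ (Real.one_lt_exp_iff.2 (hpos ε hε))⟩
    · intro d ε hε
      have h1 : c * ((ε⁻¹ ^ 2 - 1) / c) = ε⁻¹ ^ 2 - 1 := by field_simp
      have h2 : ∀ S : ℝ, (Real.exp ((ε⁻¹ ^ 2 - 1) / c))⁻¹ ^ 2 < ω ^ S ↔ S < ε⁻¹ ^ 2 - 1 := by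
        intro S
        rw [sq_lt_rpow_iff hω (by positivity) hc, inv_inv, Real.log_exp, h1]
      simp only [h2]
    · intro d hd ε hε
      have := hlog ε hε
      positivity
    · intro d ε hε
      have h0 := hpos ε hε
      have h1 := hinv ε hε
      simp only [inv_inv, Real.log_exp]
      rw [rpow_two_mul' (by linarith)]
      refine rpow_add_le (by positivity) (by positivity) (by positivity) hs (by positivity) ?_
      have h2 : (1 + 1 / c) * ε⁻¹ ^ 2 = ε⁻¹ ^ 2 + (ε⁻¹ ^ 2 - 1) / c + 1 / c := by ring
      have h3 : 0 < 1 / c := by positivity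
      nlinarith
    · intro M hM
      refine ⟨1 + c * M + M, by positivity, fun d ε hε hle => ?_⟩
      simp only [inv_inv]
      by_contra! hcon
      have h1 := hinv ε hε
      have hd : (0 : ℝ) ≤ d := d.cast_nonneg
      have h2 := Real.add_one_le_exp ((ε⁻¹ ^ 2 - 1) / c)
      have h3 : (ε⁻¹ ^ 2 - 1) / c < M := by linarith
      rw [div_lt_iff₀ hc0] at h3
      have h4 : (d : ℝ) < M := by linarith [Real.exp_pos ((ε⁻¹ ^ 2 - 1) / c)]
      nlinarith
end
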